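/- arXiv:1903.12512 — 3 statements merged into one kernel-verified Lean document; each statement's English description precedes it below -/
import Mathlib

section
/- Let k be an algebraically closed field and A a finite-dimensional semisimple k-algebra, so that by Artin–Wedderburn A ≅ M_{n_1}(k) × ⋯ × M_{n_r}(k). Then the Frobenius dimension of A equals Σ_{i=1}^{r} n_i², i.e. Frobdim A = dim_k A. -/
/-!
A nearly Frobenius coproduct `Δ` is determined by `Δ 1`, which can be any tensor `t` with
`(a ⊗ 1) t = t (1 ⊗ a)` for all `a`. A Frobenius form `l` on `A` identifies `x ⊗ y` with the
endomorphism `c ↦ l (y c) x`, hence `A ⊗ A` with `End_k A`, and these tensors with the left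
`A`-linear endomorphisms, that is, with the right multiplications by elements of `A`.

Semisimple algebras over any field have a Frobenius form: by Artin–Wedderburn it suffices to compose
the matrix trace with a nonzero functional on each division algebra and to sum over the factors.
-/

open TensorProduct

/-- A nearly Frobenius coproduct on a `k`-algebra `A`. -/
def IsNearlyFrobenius (k A : Type*) [Field k] [Ring A] [Algebra k A]
    (Δ : A →ₗ[k] A ⊗[k] A) : Prop :=
  ∀ a b : A, Δ (a * b) = (a ⊗ₜ[k] (1 : A)) * Δ b ∧ Δ (a * b) = Δ a * ((1 : A) ⊗ₜ[k] b)

/-- The Frobenius space of an algebra. -/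
def FrobeniusSpace (k A : Type*) [Field k] [Ring A] [Algebra k A] :
    Submodule k (A →ₗ[k] A ⊗[k] A) where
  carrier := {Δ | IsNearlyFrobenius k A Δ}
  add_mem' := by
    intro Δ₁ Δ₂ h₁ h₂ a b
    refine ⟨?_, ?_⟩
    · simp only [LinearMap.add_apply, (h₁ a b).1, (h₂ a b).1, mul_add]
    · simp only [LinearMap.add_apply, (h₁ a b).2, (h₂ a b).2, add_mul]
  zero_mem' := by
    intro a b
    simp
  smul_mem' := by
    intro c Δ h a b
    refine ⟨?_, ?_⟩
    · simp only [LinearMap.smul_apply, (h a b).1, Algebra.mul_smul_comm]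
    · simp only [LinearMap.smul_apply, (h a b).2, Algebra.smul_mul_assoc]

section CasimirTensors

variable (R A : Type*) [CommSemiring R] [Semiring A] [Algebra R A]

/-- The tensors `t` on which the outer left and the outer right action of `A` agree, known as
Casimir elements when `A` is a Frobenius algebra. They are the possible values `Δ 1` of a nearly
Frobenius coproduct. -/
def casimirSubmodule : Submodule R (A ⊗[R] A) where
  carrier := {t | ∀ a : A, (a ⊗ₜ[R] (1 : A)) * t = t * ((1 : A) ⊗ₜ[R] a)}
  add_mem' hs ht a := by rw [mul_add, add_mul, hs a, ht a]
  zero_mem' a := by rw [mul_zero, zero_mul]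
  smul_mem' r t ht a := by rw [mul_smul_comm, smul_mul_assoc, ht a]

variable {R A}

theorem mem_casimirSubmodule {t : A ⊗[R] A} :
    t ∈ casimirSubmodule R A ↔ ∀ a : A, (a ⊗ₜ[R] (1 : A)) * t = t * ((1 : A) ⊗ₜ[R] a) :=
  Iff.rfl

/-- The coproduct `a ↦ (a ⊗ 1) t` generated by a tensor `t`. -/
def coproductOfTensor (t : A ⊗[R] A) : A →ₗ[R] A ⊗[R] A :=
  LinearMap.mulRight R t ∘ₗ (TensorProduct.mk R A A).flip 1

@[simp]
theorem coproductOfTensor_apply (t : A ⊗[R] A) (a : A) :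
    coproductOfTensor t a = (a ⊗ₜ[R] (1 : A)) * t :=
  rfl

end CasimirTensors

section Coproducts

variable {k A : Type*} [Field k] [Ring A] [Algebra k A]

theorem IsNearlyFrobenius.apply_eq_tmul_one_mul {Δ : A →ₗ[k] A ⊗[k] A}
    (hΔ : IsNearlyFrobenius k A Δ) (a : A) : Δ a = (a ⊗ₜ[k] (1 : A)) * Δ 1 := by
  simpa only [mul_one] using (hΔ a 1).1

theorem IsNearlyFrobenius.apply_eq_mul_one_tmul {Δ : A →ₗ[k] A ⊗[k] A}
    (hΔ : IsNearlyFrobenius k A Δ) (a : A) : Δ a = Δ 1 * ((1 : A) ⊗ₜ[k] a) := by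
  simpa only [one_mul] using (hΔ 1 a).2

theorem IsNearlyFrobenius.apply_one_mem_casimirSubmodule {Δ : A →ₗ[k] A ⊗[k] A}
    (hΔ : IsNearlyFrobenius k A Δ) : Δ 1 ∈ casimirSubmodule k A := fun a => by
  rw [← hΔ.apply_eq_tmul_one_mul, ← hΔ.apply_eq_mul_one_tmul]

theorem isNearlyFrobenius_coproductOfTensor {t : A ⊗[k] A} (ht : t ∈ casimirSubmodule k A) :
    IsNearlyFrobenius k A (coproductOfTensor t) := fun a b => by
  have left : coproductOfTensor t (a * b) = (a ⊗ₜ[k] (1 : A)) * coproductOfTensor t b := by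
    simp [← mul_assoc]
  refine ⟨left, ?_⟩
  rw [left, coproductOfTensor_apply, coproductOfTensor_apply, ht b, mul_assoc]

variable (k A)

/-- Evaluation at `1` identifies nearly Frobenius coproducts with Casimir tensors. -/
def frobeniusSpaceEquivCasimir : FrobeniusSpace k A ≃ₗ[k] casimirSubmodule k A where
  toFun Δ := ⟨Δ.1 1, Δ.2.apply_one_mem_casimirSubmodule⟩
  map_add' _ _ := rfl
  map_smul' _ _ := rfl
  invFun t := ⟨coproductOfTensor t.1, isNearlyFrobenius_coproductOfTensor t.2⟩
  left_inv Δ := Subtype.ext <| LinearMap.ext fun a => (Δ.2.apply_eq_tmul_one_mul a).symm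
  right_inv t := Subtype.ext <| one_mul t.1

end Coproducts

section TensorToEnd

variable {R A : Type*} [CommSemiring R] [Semiring A] [Algebra R A]

/-- The linear map `A ⊗ A → End_R A` sending `x ⊗ y` to `c ↦ l (y * c) • x`, where `l` is a linear
functional on `A`. -/
noncomputable def tensorToEnd (l : Module.Dual R A) : A ⊗[R] A →ₗ[R] Module.End R A :=
  dualTensorHom R A A ∘ₗ ((LinearMap.mul R A).compr₂ l).rTensor A ∘ₗ
    (TensorProduct.comm R A A).toLinearMap

@[simp]
theorem tensorToEnd_tmul_apply (l : Module.Dual R A) (x y c : A) :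
    tensorToEnd l (x ⊗ₜ[R] y) c = l (y * c) • x :=
  rfl

theorem tensorToEnd_tmul_one_mul (l : Module.Dual R A) (a : A) (t : A ⊗[R] A) :
    tensorToEnd l ((a ⊗ₜ[R] (1 : A)) * t) = LinearMap.mulLeft R a ∘ₗ tensorToEnd l t := by
  induction t with
  | zero => simp
  | tmul x y => ext c; simp
  | add s t hs ht => rw [mul_add, map_add, map_add, hs, ht, LinearMap.comp_add]

theorem tensorToEnd_mul_one_tmul (l : Module.Dual R A) (a : A) (t : A ⊗[R] A) :
    tensorToEnd l (t * ((1 : A) ⊗ₜ[R] a)) = tensorToEnd l t ∘ₗ LinearMap.mulLeft R a := by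
  induction t with
  | zero => simp
  | tmul x y => ext c; simp [mul_assoc]
  | add s t hs ht => rw [add_mul, map_add, map_add, hs, ht, LinearMap.add_comp]

theorem mem_range_mul_flip_iff {f : Module.End R A} :
    f ∈ LinearMap.range (LinearMap.mul R A).flip ↔
      ∀ a : A, LinearMap.mulLeft R a ∘ₗ f = f ∘ₗ LinearMap.mulLeft R a := by
  constructor
  · rintro ⟨b, rfl⟩ a
    ext c
    simp [mul_assoc]
  · intro hf
    refine ⟨f 1, LinearMap.ext fun a => ?_⟩
    simpa using LinearMap.congr_fun (hf a) 1

theorem injective_mul_flip : Function.Injective (LinearMap.mul R A).flip := fun a b hab => by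
  simpa using LinearMap.congr_fun hab 1

theorem comap_tensorToEnd_range_mul_flip {l : Module.Dual R A}
    (hl : Function.Injective (tensorToEnd l)) :
    (LinearMap.range (LinearMap.mul R A).flip).comap (tensorToEnd l) = casimirSubmodule R A := by
  ext t
  simp only [Submodule.mem_comap, mem_range_mul_flip_iff, ← tensorToEnd_tmul_one_mul,
    ← tensorToEnd_mul_one_tmul, hl.eq_iff, mem_casimirSubmodule]

end TensorToEnd

/-- A linear functional `l` on an algebra is a Frobenius form if the bilinear form
`(x, y) ↦ l (x * y)` is nondegenerate. Only nondegeneracy in the left variable is imposed; for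
finite-dimensional algebras over a field this gives both sides. -/
def IsFrobeniusForm {R A : Type*} [CommSemiring R] [Semiring A] [Algebra R A]
    (l : Module.Dual R A) : Prop :=
  ((LinearMap.mul R A).compr₂ l).SeparatingLeft

namespace IsFrobeniusForm

section FrobeniusDimension

variable {k A : Type*} [Field k] [Ring A] [Algebra k A] [FiniteDimensional k A]
  {l : Module.Dual k A}

theorem bijective_tensorToEnd (hl : IsFrobeniusForm l) :
    Function.Bijective (tensorToEnd l) := by
  have injective : Function.Injective ((LinearMap.mul k A).compr₂ l) :=
    LinearMap.ker_eq_bot.mp (LinearMap.separatingLeft_iff_ker_eq_bot.mp hl)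
  let toDual : A ≃ₗ[k] Module.Dual k A :=
    .ofInjectiveOfFinrankEq _ injective Subspace.dual_finrank_eq.symm
  exact (dualTensorHomEquiv k A A).bijective.comp <|
    (toDual.rTensor A).bijective.comp (TensorProduct.comm k A A).bijective

theorem finrank_casimirSubmodule (hl : IsFrobeniusForm l) :
    Module.finrank k (casimirSubmodule k A) = Module.finrank k A := by
  have bijective := hl.bijective_tensorToEnd
  calc Module.finrank k (casimirSubmodule k A)
      = Module.finrank k ((casimirSubmodule k A).map (tensorToEnd l)) :=
        (LinearEquiv.ofBijective _ bijective).finrank_map_eq _ |>.symm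
    _ = Module.finrank k (LinearMap.range (LinearMap.mul k A).flip) := by
        rw [← comap_tensorToEnd_range_mul_flip bijective.injective,
          Submodule.map_comap_eq_of_surjective bijective.surjective]
    _ = Module.finrank k A := LinearMap.finrank_range_of_inj injective_mul_flip

theorem finrank_frobeniusSpace (hl : IsFrobeniusForm l) :
    Module.finrank k (FrobeniusSpace k A) = Module.finrank k A :=
  (frobeniusSpaceEquivCasimir k A).finrank_eq.trans hl.finrank_casimirSubmodule

end FrobeniusDimension

section Constructions

variable {R : Type*} [CommSemiring R]

theorem comp_algEquiv {A B : Type*} [Semiring A] [Algebra R A] [Semiring B] [Algebra R B]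
    {l : Module.Dual R B} (hl : IsFrobeniusForm l) (e : A ≃ₐ[R] B) :
    IsFrobeniusForm (l ∘ₗ e.toLinearMap) := fun x hx => by
  refine (map_eq_zero_iff e e.injective).mp (hl (e x) fun y => ?_)
  simpa using hx (e.symm y)

theorem sum_comp_proj {ι : Type*} [Fintype ι] {A : ι → Type*} [∀ i, Semiring (A i)]
    [∀ i, Algebra R (A i)] {l : ∀ i, Module.Dual R (A i)} (hl : ∀ i, IsFrobeniusForm (l i)) :
    IsFrobeniusForm (∑ i, l i ∘ₗ LinearMap.proj i) := fun x hx => by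
  classical
  funext i
  refine hl i (x i) fun y => ?_
  calc l i (x i * y)
      = ∑ j, l j ((x * Pi.single i y) j) := by
        rw [Fintype.sum_eq_single i fun j hj => by simp [hj]]
        simp
    _ = 0 := by simpa using hx (Pi.single i y)

theorem comp_trace {n A : Type*} [Fintype n] [DecidableEq n] [Semiring A] [Algebra R A]
    {l : Module.Dual R A} (hl : IsFrobeniusForm l) :
    IsFrobeniusForm (l ∘ₗ Matrix.traceLinearMap n R A) := fun x hx => by
  ext i j
  refine hl (x i j) fun y => ?_
  simpa [Matrix.trace_mul_single] using hx (Matrix.single j i y)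

theorem of_ne_zero {D : Type*} [DivisionRing D] [Algebra R D] {l : Module.Dual R D}
    (hl : l ≠ 0) : IsFrobeniusForm l := fun x hx => by
  by_contra hx0
  refine hl (LinearMap.ext fun d => ?_)
  simpa [mul_inv_cancel_left₀ hx0] using hx (x⁻¹ * d)

end Constructions

end IsFrobeniusForm

theorem exists_isFrobeniusForm (k A : Type*) [Field k] [Ring A] [Algebra k A]
    [IsSemisimpleRing A] : ∃ l : Module.Dual k A, IsFrobeniusForm l := by
  obtain ⟨n, D, d, _, _, _, ⟨e⟩⟩ := IsSemisimpleRing.exists_algEquiv_pi_matrix_divisionRing k A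
  have exists_ne_zero (i : Fin n) : ∃ l : Module.Dual k (D i), l ≠ 0 := exists_ne 0
  choose l hl using exists_ne_zero
  exact ⟨_, (IsFrobeniusForm.sum_comp_proj fun i =>
    (IsFrobeniusForm.of_ne_zero (hl i)).comp_trace).comp_algEquiv e⟩

theorem frobdim_of_semisimple_general (k A : Type*) [Field k] [Ring A] [Algebra k A]
    [FiniteDimensional k A] [IsSemisimpleRing A] :
    Module.finrank k (FrobeniusSpace k A) = Module.finrank k A := by
  obtain ⟨l, hl⟩ := exists_isFrobeniusForm k A
  exact hl.finrank_frobeniusSpace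

/-- over an algebraically closed field, the Frobenius dimension of a
finite dimensional semisimple algebra equals its dimension (which by
Artin--Wedderburn is `∑ nᵢ²`). -/
theorem frobdim_of_semisimple (k A : Type*) [Field k] [IsAlgClosed k]
    [Ring A] [Algebra k A] [FiniteDimensional k A] [IsSemisimpleRing A] :
    Module.finrank k (FrobeniusSpace k A) = Module.finrank k A :=
  frobdim_of_semisimple_general k A
end

section
/- An associative unital k-algebra A admits a normalized nearly Frobenius coproduct if and only if A is separable over k, i.e. if and only if there exists a separability element e ∈ A ⊗[k] A satisfying m(e) = 1 and (a ⊗ 1)·e = e·(1 ⊗ a) for all a ∈ A. -/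
open TensorProduct

section Coproducts

variable {R A : Type*} [CommSemiring R] [Semiring A] [Algebra R A]

/-- Nearly Frobenius coproducts over an arbitrary commutative semiring: maps of `A`-bimodules
`A → A ⊗[R] A`, where `A` acts on the outer sides of `A ⊗[R] A`. For algebras over a field this
is `IsNearlyFrobenius`. -/
def IsBimoduleCoproduct (Δ : A →ₗ[R] A ⊗[R] A) : Prop :=
  ∀ a b : A, Δ (a * b) = (a ⊗ₜ[R] (1 : A)) * Δ b ∧ Δ (a * b) = Δ a * ((1 : A) ⊗ₜ[R] b)

/-- Casimir elements of `A ⊗[R] A`: those on which the left and right outer actions of `A` agree.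
A separability element is a Casimir element with product `1`. -/
def IsCasimir (e : A ⊗[R] A) : Prop :=
  ∀ a : A, (a ⊗ₜ[R] (1 : A)) * e = e * ((1 : A) ⊗ₜ[R] a)

/-- The coproduct `a ↦ (a ⊗ 1) * e`, the unique left `A`-linear map sending `1` to `e`. -/
def inducedCoproduct (e : A ⊗[R] A) : A →ₗ[R] A ⊗[R] A :=
  LinearMap.mulRight R e ∘ₗ Algebra.TensorProduct.includeLeft.toLinearMap

theorem inducedCoproduct_apply (e : A ⊗[R] A) (a : A) :
    inducedCoproduct e a = (a ⊗ₜ[R] (1 : A)) * e :=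
  rfl

theorem IsCasimir.isBimoduleCoproduct {e : A ⊗[R] A} (he : IsCasimir e) :
    IsBimoduleCoproduct (inducedCoproduct e) := by
  intro a b
  have left_linear : inducedCoproduct e (a * b) = (a ⊗ₜ[R] (1 : A)) * inducedCoproduct e b := by
    simp only [inducedCoproduct_apply, ← mul_assoc, Algebra.TensorProduct.tmul_mul_tmul, mul_one]
  refine ⟨left_linear, ?_⟩
  calc inducedCoproduct e (a * b)
      = (a ⊗ₜ[R] (1 : A)) * ((b ⊗ₜ[R] (1 : A)) * e) := left_linear
    _ = (a ⊗ₜ[R] (1 : A)) * (e * ((1 : A) ⊗ₜ[R] b)) := by rw [he b]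
    _ = inducedCoproduct e a * ((1 : A) ⊗ₜ[R] b) := (mul_assoc _ _ _).symm

theorem IsBimoduleCoproduct.isCasimir_map_one {Δ : A →ₗ[R] A ⊗[R] A}
    (hΔ : IsBimoduleCoproduct Δ) : IsCasimir (Δ 1) := by
  intro a
  calc (a ⊗ₜ[R] (1 : A)) * Δ 1
      = Δ (a * 1) := (hΔ a 1).1.symm
    _ = Δ (1 * a) := by rw [mul_one, one_mul]
    _ = Δ 1 * ((1 : A) ⊗ₜ[R] a) := (hΔ 1 a).2

theorem IsBimoduleCoproduct.inducedCoproduct_map_one {Δ : A →ₗ[R] A ⊗[R] A}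
    (hΔ : IsBimoduleCoproduct Δ) : inducedCoproduct (Δ 1) = Δ := by
  ext a
  rw [inducedCoproduct_apply, ← (hΔ a 1).1, mul_one]

theorem isBimoduleCoproduct_iff_exists_isCasimir {Δ : A →ₗ[R] A ⊗[R] A} :
    IsBimoduleCoproduct Δ ↔ ∃ e : A ⊗[R] A, IsCasimir e ∧ inducedCoproduct e = Δ := by
  constructor
  · exact fun hΔ => ⟨Δ 1, hΔ.isCasimir_map_one, hΔ.inducedCoproduct_map_one⟩
  · rintro ⟨e, he, rfl⟩
    exact he.isBimoduleCoproduct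

theorem mul'_tmul_one_mul (a : A) (x : A ⊗[R] A) :
    LinearMap.mul' R A ((a ⊗ₜ[R] (1 : A)) * x) = a * LinearMap.mul' R A x := by
  have tmul_one_mul_eq_smul : (a ⊗ₜ[R] (1 : A)) * x = a • x := by
    rw [← smul_one_mul a x, Algebra.TensorProduct.one_def, TensorProduct.smul_tmul', smul_eq_mul,
      mul_one]
  rw [tmul_one_mul_eq_smul]
  exact (LinearMap.mul'' R A).map_smul a x

theorem mul'_comp_inducedCoproduct (e : A ⊗[R] A) :
    LinearMap.mul' R A ∘ₗ inducedCoproduct e = LinearMap.mulRight R (LinearMap.mul' R A e) :=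
  LinearMap.ext fun a => mul'_tmul_one_mul a e

theorem mul'_comp_inducedCoproduct_eq_id_iff {e : A ⊗[R] A} :
    LinearMap.mul' R A ∘ₗ inducedCoproduct e = LinearMap.id ↔ LinearMap.mul' R A e = 1 := by
  rw [mul'_comp_inducedCoproduct]
  constructor
  · intro h
    simpa using LinearMap.congr_fun h 1
  · intro h
    rw [h, LinearMap.mulRight_one]

end Coproducts

theorem normalized_iff_separable_general (R A : Type*) [CommSemiring R] [Semiring A]
    [Algebra R A] :
    (∃ Δ : A →ₗ[R] A ⊗[R] A, IsBimoduleCoproduct Δ ∧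
        LinearMap.mul' R A ∘ₗ Δ = LinearMap.id) ↔
      (∃ e : A ⊗[R] A, LinearMap.mul' R A e = 1 ∧ IsCasimir e) := by
  constructor
  · rintro ⟨Δ, hΔ, normalized⟩
    obtain ⟨e, he, rfl⟩ := isBimoduleCoproduct_iff_exists_isCasimir.mp hΔ
    exact ⟨e, mul'_comp_inducedCoproduct_eq_id_iff.mp normalized, he⟩
  · rintro ⟨e, mul_eq_one, he⟩
    exact ⟨inducedCoproduct e, he.isBimoduleCoproduct,
      mul'_comp_inducedCoproduct_eq_id_iff.mpr mul_eq_one⟩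

/-- an algebra admits a normalized nearly Frobenius coproduct if
and only if it is separable, i.e. admits a separability element. -/
theorem normalized_iff_separable (k A : Type*) [Field k] [Ring A] [Algebra k A] :
    (∃ Δ : A →ₗ[k] A ⊗[k] A, IsNearlyFrobenius k A Δ ∧
        LinearMap.mul' k A ∘ₗ Δ = LinearMap.id) ↔
      (∃ e : A ⊗[k] A, LinearMap.mul' k A e = 1 ∧
        ∀ a : A, (a ⊗ₜ[k] (1 : A)) * e = e * ((1 : A) ⊗ₜ[k] a)) :=
  normalized_iff_separable_general k A
end

section
/- Let A be an associative unital k-algebra admitting a normalized nearly Frobenius coproduct. Then A is finite-dimensional over k and A is a semisimple ring (every A-module is semisimple; equivalently every A-module is projective). -/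
open TensorProduct

/-! If `Δ` is a normalized nearly Frobenius coproduct, then `e = Δ 1 = ∑ xᵢ ⊗ yᵢ` is a separability
idempotent: `a e = e a` for all `a`, and `∑ xᵢ yᵢ = 1`.

Semisimplicity is Maschke's argument: averaging a linear map `f` to `m ↦ ∑ xᵢ f(yᵢ m)` makes it
`A`-linear and fixes maps that already are, so linear splittings average to `A`-linear ones.

For finiteness, let `(bⱼ, φⱼ)` be a dual basis of `A`. Applying `id ⊗ φⱼ` to `a e = e a` gives
`∑ᵢ a xᵢ φⱼ(yᵢ) = ∑ᵢ xᵢ φⱼ(yᵢ a)`. The left side vanishes for `j` outside a finite set `J` which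
does not depend on `a`, and the right side lies in the span of the `xᵢ`. Hence
`a = ∑ᵢ a xᵢ yᵢ = ∑ⱼ (∑ᵢ a xᵢ φⱼ(yᵢ)) bⱼ` lies in the span of the products `xᵢ bⱼ`, `j ∈ J`.
-/

section Sandwich

variable {R A M N P : Type*} [CommSemiring R] [Semiring A] [Algebra R A]
  [AddCommMonoid M] [Module R M] [Module A M] [IsScalarTower R A M]
  [AddCommMonoid N] [Module R N] [Module A N] [IsScalarTower R A N]
  [AddCommMonoid P] [Module R P] [Module A P] [IsScalarTower R A P]

/-- The action of `A ⊗ A` on `R`-linear maps between `A`-modules by multiplication on both sides: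
`x ⊗ y` sends `f` to `m ↦ x • f (y • m)`. -/
noncomputable def sandwich (f : M →ₗ[R] N) : A ⊗[R] A →ₗ[R] M →ₗ[R] N :=
  TensorProduct.lift <| LinearMap.mk₂ R
    (fun x y ↦ Algebra.lsmul R R N x ∘ₗ f ∘ₗ Algebra.lsmul R R M y)
    (fun _ _ _ ↦ by ext; simp) (fun _ _ _ ↦ by ext; simp)
    (fun _ _ _ ↦ by ext; simp) (fun _ _ _ ↦ by ext; simp [smul_comm _ (_ : R)])

@[simp]
lemma sandwich_tmul_apply (f : M →ₗ[R] N) (x y : A) (m : M) :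
    sandwich f (x ⊗ₜ[R] y) m = x • f (y • m) :=
  rfl

lemma sandwich_tmul_one_mul (f : M →ₗ[R] N) (a : A) (t : A ⊗[R] A) (m : M) :
    sandwich f ((a ⊗ₜ[R] 1) * t) m = a • sandwich f t m := by
  induction t with
  | zero => simp
  | tmul x y => simp [mul_smul]
  | add s t hs ht => simp [mul_add, hs, ht]

lemma sandwich_mul_one_tmul (f : M →ₗ[R] N) (a : A) (t : A ⊗[R] A) (m : M) :
    sandwich f (t * (1 ⊗ₜ[R] a)) m = sandwich f t (a • m) := by
  induction t with
  | zero => simp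
  | tmul x y => simp [mul_smul]
  | add s t hs ht => simp [add_mul, hs, ht]

lemma sandwich_apply_linearMap (f : N →ₗ[R] P) (g : M →ₗ[A] N) (t : A ⊗[R] A) (m : M) :
    sandwich f t (g m) = sandwich (f ∘ₗ g.restrictScalars R) t m := by
  induction t with
  | zero => simp
  | tmul x y => simp
  | add s t hs ht => simp [hs, ht]

lemma sandwich_restrictScalars (g : M →ₗ[A] N) (t : A ⊗[R] A) (m : M) :
    sandwich (g.restrictScalars R) t m = LinearMap.mul' R A t • g m := by
  induction t with
  | zero => simp
  | tmul x y => simp [mul_smul]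
  | add s t hs ht => simp [add_smul, hs, ht]

end Sandwich

section RightCoeff

variable {R A ι : Type*} [CommSemiring R] [Semiring A] [Algebra R A]

open Classical in
/-- The coefficients of an element of `A ⊗ A` along a coordinate map `φ` of the second factor:
the `j`-th coefficient of `x ⊗ y` is `φ y j • x`. -/
noncomputable def rightCoeff (φ : A →ₗ[R] ι →₀ R) : A ⊗[R] A →ₗ[R] ι →₀ A :=
  (finsuppScalarRight R R A ι).toLinearMap ∘ₗ φ.lTensor A

@[simp]
lemma rightCoeff_tmul_apply (φ : A →ₗ[R] ι →₀ R) (x y : A) (j : ι) :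
    rightCoeff φ (x ⊗ₜ[R] y) j = φ y j • x := by
  simp [rightCoeff]

lemma rightCoeff_tmul_one_mul (φ : A →ₗ[R] ι →₀ R) (a : A) (t : A ⊗[R] A) (j : ι) :
    rightCoeff φ ((a ⊗ₜ[R] 1) * t) j = a * rightCoeff φ t j := by
  induction t with
  | zero => simp
  | tmul x y => simp
  | add s t hs ht => simp [mul_add, hs, ht]

lemma sum_rightCoeff_mul {φ : A →ₗ[R] ι →₀ R} {b : ι → A}
    (hφ : Finsupp.linearCombination R b ∘ₗ φ = LinearMap.id) (t : A ⊗[R] A) :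
    ((rightCoeff φ t).sum fun j c ↦ c * b j) = LinearMap.mul' R A t := by
  induction t with
  | zero => simp
  | tmul x y =>
    have coeff_eq : rightCoeff φ (x ⊗ₜ y) = (φ y).mapRange (· • x) (zero_smul R x) := by
      ext j; simp
    calc ((rightCoeff φ (x ⊗ₜ y)).sum fun j c ↦ c * b j)
        = (φ y).sum fun j r ↦ r • x * b j := by
          rw [coeff_eq, Finsupp.sum_mapRange_index fun _ ↦ zero_mul _]
      _ = x * Finsupp.linearCombination R b (φ y) := by
          simp only [Finsupp.linearCombination_apply, Finsupp.mul_sum, smul_mul_assoc,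
            mul_smul_comm]
      _ = x * y := congrArg (x * ·) (LinearMap.congr_fun hφ y)
      _ = LinearMap.mul' R A (x ⊗ₜ y) := LinearMap.mul'_apply.symm
  | add s t hs ht =>
    rw [map_add, map_add, Finsupp.sum_add_index' (fun _ ↦ zero_mul _) fun _ _ _ ↦ add_mul _ _ _,
      hs, ht]

lemma exists_finset_rightCoeff_mul_one_tmul_mem_span (φ : A →ₗ[R] ι →₀ R) (t : A ⊗[R] A) :
    ∃ X : Finset A, ∀ a j,
      rightCoeff φ (t * (1 ⊗ₜ[R] a)) j ∈ Submodule.span R (X : Set A) := by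
  classical
  obtain ⟨T, rfl⟩ := TensorProduct.exists_finset t
  refine ⟨T.image Prod.fst, fun a j ↦ ?_⟩
  simp only [Finset.sum_mul, Algebra.TensorProduct.tmul_mul_tmul, mul_one, map_sum,
    Finsupp.finsetSum_apply, rightCoeff_tmul_apply]
  exact Submodule.sum_mem _ fun z hz ↦
    Submodule.smul_mem _ _ (Submodule.subset_span (Finset.mem_image_of_mem _ hz))

end RightCoeff

/-- A separability idempotent of an `R`-algebra `A`: the image of `1` under a bimodule
section `A → A ⊗ A` of the multiplication, as a condition on that image alone. -/
structure IsSeparabilityIdempotent {R A : Type*} [CommSemiring R] [Semiring A] [Algebra R A]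
    (e : A ⊗[R] A) : Prop where
  tmul_one_mul_eq (a : A) : (a ⊗ₜ[R] 1) * e = e * (1 ⊗ₜ[R] a)
  mul'_eq_one : LinearMap.mul' R A e = 1

namespace IsSeparabilityIdempotent

section Semiring

variable {R A M N : Type*} [CommSemiring R] [Semiring A] [Algebra R A]
  [AddCommMonoid M] [Module R M] [Module A M] [IsScalarTower R A M]
  [AddCommMonoid N] [Module R N] [Module A N] [IsScalarTower R A N]
  {e : A ⊗[R] A}

/-- The average `m ↦ ∑ xᵢ • f (yᵢ • m)` of an `R`-linear map over a separability idempotent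
`∑ xᵢ ⊗ yᵢ`, which is `A`-linear. -/
noncomputable def average (he : IsSeparabilityIdempotent e) (f : M →ₗ[R] N) : M →ₗ[A] N where
  toFun := sandwich f e
  map_add' := map_add _
  map_smul' a m := by
    rw [← sandwich_mul_one_tmul, ← he.tmul_one_mul_eq, sandwich_tmul_one_mul, RingHom.id_apply]

lemma exists_leftInverse (he : IsSeparabilityIdempotent e) (i : M →ₗ[A] N) (p : N →ₗ[R] M)
    (hp : p ∘ₗ i.restrictScalars R = LinearMap.id) :
    ∃ q : N →ₗ[A] M, q ∘ₗ i = LinearMap.id := by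
  refine ⟨he.average p, LinearMap.ext fun m ↦ ?_⟩
  calc sandwich p e (i m)
      = sandwich (LinearMap.id.restrictScalars R) e m := by
        rw [sandwich_apply_linearMap, hp]; rfl
    _ = m := by
        rw [sandwich_restrictScalars, he.mul'_eq_one, one_smul, LinearMap.id_apply]

theorem moduleFinite [Module.Projective R A] (he : IsSeparabilityIdempotent e) :
    Module.Finite R A := by
  -- This dual basis is indexed by `A` itself, with `bⱼ = j`.
  obtain ⟨φ, hφ⟩ := Module.projective_def'.1 ‹Module.Projective R A›
  obtain ⟨X, hX⟩ := exists_finset_rightCoeff_mul_one_tmul_mem_span φ e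
  let J : Finset A := (rightCoeff φ e).support
  have sum_rightCoeff_mul_id : ((rightCoeff φ e).sum fun j c ↦ c * j) = LinearMap.mul' R A e :=
    sum_rightCoeff_mul hφ e
  have coeff_mem (a j : A) : a * rightCoeff φ e j ∈ Submodule.span R (X : Set A) := by
    rw [← rightCoeff_tmul_one_mul, he.tmul_one_mul_eq]
    exact hX a j
  have expansion (a : A) : a = ∑ j ∈ J, a * rightCoeff φ e j * j := by
    calc a = a * (rightCoeff φ e).sum fun j c ↦ c * j := by
          rw [sum_rightCoeff_mul_id, he.mul'_eq_one, mul_one]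
      _ = ∑ j ∈ J, a * rightCoeff φ e j * j := by
          simp only [Finsupp.sum, Finset.mul_sum, mul_assoc, J]
  have span_mul_span : Submodule.span R (X : Set A) * Submodule.span R (J : Set A) = ⊤ := by
    refine eq_top_iff.2 fun a _ ↦ ?_
    rw [expansion a]
    exact Submodule.sum_mem _ fun j hj ↦
      Submodule.mul_mem_mul (coeff_mem a j) (Submodule.subset_span hj)
  exact ⟨span_mul_span ▸ Submodule.FG.mul ⟨X, rfl⟩ ⟨J, rfl⟩⟩

end Semiring

theorem isSemisimpleModule {R A M : Type*} [CommRing R] [Ring A] [Algebra R A]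
    [AddCommGroup M] [Module R M] [Module A M] [IsScalarTower R A M] [IsSemisimpleModule R M]
    {e : A ⊗[R] A} (he : IsSeparabilityIdempotent e) : IsSemisimpleModule A M := by
  refine { exists_isCompl := fun N ↦ ?_ }
  obtain ⟨p, hp⟩ := IsSemisimpleModule.extension_property (N.subtype.restrictScalars R)
    N.subtype_injective LinearMap.id
  obtain ⟨q, hq⟩ := he.exists_leftInverse N.subtype p hp
  exact ⟨LinearMap.ker q, LinearMap.isCompl_of_proj (LinearMap.congr_fun hq)⟩

end IsSeparabilityIdempotent

lemma IsNearlyFrobenius.isSeparabilityIdempotent {k A : Type*} [Field k] [Ring A] [Algebra k A]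
    {Δ : A →ₗ[k] A ⊗[k] A} (hΔ : IsNearlyFrobenius k A Δ)
    (h_one : LinearMap.mul' k A (Δ 1) = 1) : IsSeparabilityIdempotent (Δ 1) where
  tmul_one_mul_eq a := by rw [← (hΔ a 1).1, ← (hΔ 1 a).2, mul_one, one_mul]
  mul'_eq_one := h_one

theorem finiteDimensional_and_semisimple_of_normalized_general (R A : Type*) [CommRing R]
    [IsSemisimpleRing R] [Ring A] [Algebra R A] {e : A ⊗[R] A} (he : IsSeparabilityIdempotent e) :
    Module.Finite R A ∧ IsSemisimpleRing A := by
  have : Module.Projective R A := Module.projective_of_isSemisimpleRing R A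
  exact ⟨he.moduleFinite, he.isSemisimpleModule⟩

/-- an algebra admitting a normalized nearly Frobenius coproduct
is finite dimensional and semisimple. -/
theorem finiteDimensional_and_semisimple_of_normalized (k A : Type*) [Field k]
    [Ring A] [Algebra k A]
    (h : ∃ Δ : A →ₗ[k] A ⊗[k] A, IsNearlyFrobenius k A Δ ∧
      LinearMap.mul' k A ∘ₗ Δ = LinearMap.id) :
    FiniteDimensional k A ∧ IsSemisimpleRing A := by
  obtain ⟨Δ, hΔ, h_norm⟩ := h
  exact finiteDimensional_and_semisimple_of_normalized_general k A
    (hΔ.isSeparabilityIdempotent (LinearMap.congr_fun h_norm 1))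
end
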